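/- For arbitrary nonzero q½, t½: Rad ⊆ ker(ev), and every A-submodule U of V with U ⊆ ker(ev) satisfies U ⊆ Rad. That is, Rad is the greatest A-submodule of V contained in the hyperplane {f ∈ V : f(t⁻½) = 0}. -/

import Mathlib

noncomputable section

/-- `V = ℂ[X, X⁻¹]`, the space of complex Laurent polynomials. -/
abbrev V : Type := LaurentPolynomial ℂ

/-- The monomial `X ^ m`. -/
def Xm (m : ℤ) : V := LaurentPolynomial.T m

/-- The radical of the duality pairing. -/
def Rad (pair : V →ₗ[ℂ] V →ₗ[ℂ] ℂ) : Submodule ℂ V := LinearMap.ker pair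

theorem aux_Xadd (a b : ℤ) : Xm (a + b) = Xm a * Xm b := LaurentPolynomial.T_add a b

theorem aux_X0 : Xm 0 = 1 := LaurentPolynomial.T_zero

theorem aux_XXi (f : V) : Xm 1 * (Xm (-1) * f) = f := by
  rw [← mul_assoc, ← aux_Xadd, show (1 : ℤ) + -1 = 0 by norm_num, aux_X0, one_mul]

theorem aux_XiX (f : V) : Xm (-1) * (Xm 1 * f) = f := by
  rw [← mul_assoc, ← aux_Xadd, show (-1 : ℤ) + 1 = 0 by norm_num, aux_X0, one_mul]

/-- Linear maps agreeing on monomials are equal. -/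
theorem aux_ext {M : Type*} [AddCommGroup M] [Module ℂ M] (A B : V →ₗ[ℂ] M)
    (h : ∀ m : ℤ, A (Xm m) = B (Xm m)) (f : V) : A f = B f := by
  induction f using LaurentPolynomial.induction_on' with
  | add p q hp hq => rw [map_add, map_add, hp, hq]
  | C_mul_T n a =>
    have : LaurentPolynomial.C a * LaurentPolynomial.T n = a • Xm n := by
      rw [LaurentPolynomial.smul_eq_C_mul]; rfl
    rw [this, map_smul, map_smul, h]

/-- Linear maps agreeing at `1`, with agreement propagating along `X` both ways, are equal. -/
theorem aux_ind {M : Type*} [AddCommGroup M] [Module ℂ M] (A B : V →ₗ[ℂ] M)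
    (h1 : A 1 = B 1) (h : ∀ f : V, A f = B f ↔ A (Xm 1 * f) = B (Xm 1 * f)) (f : V) :
    A f = B f := by
  refine aux_ext A B (fun m => ?_) f
  induction m using Int.induction_on with
  | zero => rw [aux_X0]; exact h1
  | succ n ih =>
    have := (h _).1 ih
    rwa [← aux_Xadd, add_comm] at this
  | pred n ih =>
    apply (h _).2
    rw [← aux_Xadd, show (1 : ℤ) + (-(n : ℤ) - 1) = -n by ring]
    exact ih

theorem aux_X2_ne : (Xm 2 - 1 : V) ≠ 0 := by
  intro h
  have h2 : Xm 2 = Xm 0 := by rw [aux_X0]; exact sub_eq_zero.1 h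
  have h3 := congrArg LaurentPolynomial.degree h2
  unfold Xm at h3
  rw [LaurentPolynomial.degree_T, LaurentPolynomial.degree_T] at h3
  have h4 : (2 : ℤ) = 0 := by exact_mod_cast h3
  norm_num at h4

/-- `Rad ⊆ ker(ev)`, and every `A`-submodule of `V` contained in
`ker(ev)` is contained in `Rad`; i.e. `Rad` is the greatest `A`-submodule of
`V` contained in the hyperplane `{f : f(t⁻½) = 0}`. -/
theorem stmt8
    (q2 t2 : ℂ) (hq2 : q2 ≠ 0) (ht2 : t2 ≠ 0)
    (S Top Pi Y : V →ₗ[ℂ] V)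
    (hS : ∀ m : ℤ, S (Xm m) = Xm (-m))
    (hPi : ∀ m : ℤ, Pi (Xm m) = q2 ^ m • Xm (-m))
    (hT : ∀ f : V, (Xm 2 - 1) * Top f
        = t2 • ((Xm 2 - 1) * S f) + (t2 - t2⁻¹) • (S f - f))
    (hY : Y = Pi ∘ₗ Top)
    (ev : V →ₗ[ℂ] ℂ) (hev : ∀ m : ℤ, ev (Xm m) = t2 ^ (-m))
    (Yz : ℤ → V →ₗ[ℂ] V)
    (hYz0 : Yz 0 = LinearMap.id) (hYz1 : Yz 1 = Y)
    (hYzadd : ∀ a b : ℤ, Yz (a + b) = Yz a ∘ₗ Yz b)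
    (pair : V →ₗ[ℂ] V →ₗ[ℂ] ℂ)
    (hpair : ∀ (m : ℤ) (g : V), pair (Xm m) g = ev (Yz (-m) g))
    :
    (∀ f ∈ Rad pair, ev f = 0) ∧
    ∀ U : Submodule ℂ V,
      (∀ f ∈ U, Top f ∈ U ∧ Pi f ∈ U ∧ Xm 1 * f ∈ U) →
      (∀ f ∈ U, ev f = 0) →
      U ≤ Rad pair := by
  have hYi : ∀ g, Y (Yz (-1) g) = g := fun g => by
    have := hYzadd 1 (-1)
    rw [show (1 : ℤ) + -1 = 0 by norm_num, hYz0, hYz1] at this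
    exact (LinearMap.congr_fun this g).symm
  have hiY : ∀ g, Yz (-1) (Y g) = g := fun g => by
    have := hYzadd (-1) 1
    rw [show (-1 : ℤ) + 1 = 0 by norm_num, hYz0, hYz1] at this
    exact (LinearMap.congr_fun this g).symm
  -- pairing and X
  have hpX : ∀ f g, pair (Xm 1 * f) g = pair f (Yz (-1) g) := fun f g => by
    refine aux_ext ((pair.flip g) ∘ₗ LinearMap.mulLeft ℂ (Xm 1)) (pair.flip (Yz (-1) g)) ?_ f
    intro m
    simp only [LinearMap.comp_apply, LinearMap.mulLeft_apply, LinearMap.flip_apply]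
    rw [← aux_Xadd, hpair, hpair, show (-(1 + m) : ℤ) = -m + -1 by ring, hYzadd]; rfl
  have hpXi : ∀ f g, pair (Xm (-1) * f) g = pair f (Y g) := fun f g => by
    have := hpX (Xm (-1) * f) (Y g)
    rw [aux_XXi, hiY] at this
    exact this.symm
  have hp1 : ∀ g, pair 1 g = ev g := fun g => by
    rw [← aux_X0, hpair, neg_zero, hYz0]; rfl
  -- S, Pi, ev and X
  have hSX : ∀ f, S (Xm 1 * f) = Xm (-1) * S f := by
    refine aux_ext (S ∘ₗ LinearMap.mulLeft ℂ (Xm 1)) (LinearMap.mulLeft ℂ (Xm (-1)) ∘ₗ S) ?_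
    intro m
    simp only [LinearMap.comp_apply, LinearMap.mulLeft_apply]
    rw [← aux_Xadd, hS, hS, ← aux_Xadd, neg_add]
  have hSS : ∀ f, S (S f) = f := by
    refine aux_ext (S ∘ₗ S) LinearMap.id ?_
    intro m
    simp [hS]
  have hPP : ∀ f, Pi (Pi f) = f := by
    refine aux_ext (Pi ∘ₗ Pi) LinearMap.id ?_
    intro m
    simp only [LinearMap.comp_apply, LinearMap.id_apply]
    rw [hPi, map_smul, hPi, smul_smul, neg_neg, ← zpow_add₀ hq2, add_neg_cancel, zpow_zero,
      one_smul]
  have hPX : ∀ f, Pi (Xm 1 * f) = q2 • (Xm (-1) * Pi f) := by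
    refine aux_ext (Pi ∘ₗ LinearMap.mulLeft ℂ (Xm 1))
      (q2 • (LinearMap.mulLeft ℂ (Xm (-1)) ∘ₗ Pi)) ?_
    intro m
    simp only [LinearMap.comp_apply, LinearMap.mulLeft_apply, LinearMap.smul_apply]
    rw [← aux_Xadd, hPi, hPi, mul_smul_comm, ← aux_Xadd, neg_add, smul_smul, zpow_add₀ hq2,
      zpow_one]
  have hevX : ∀ f, ev (Xm 1 * f) = t2⁻¹ * ev f := by
    refine aux_ext (ev ∘ₗ LinearMap.mulLeft ℂ (Xm 1)) (t2⁻¹ • ev) ?_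
    intro m
    simp only [LinearMap.comp_apply, LinearMap.mulLeft_apply, LinearMap.smul_apply, smul_eq_mul]
    rw [← aux_Xadd, hev, hev, neg_add, zpow_add₀ ht2, zpow_neg_one]
  have hevXi : ∀ f, ev (Xm (-1) * f) = t2 * ev f := fun f => by
    have := hevX (Xm (-1) * f)
    rw [aux_XXi] at this
    rw [this, mul_inv_cancel_left₀ ht2]
  have hX2 : Xm 2 = Xm 1 * Xm 1 := by rw [← aux_Xadd]; norm_num
  have hXm : Xm 1 * Xm (-1) = 1 := by rw [← aux_Xadd, ← aux_X0]; norm_num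
  set c : ℂ := t2 - t2⁻¹ with hc
  -- T relations
  have hXTX : ∀ f, Xm 1 * Top (Xm 1 * f) = Top f - c • f := fun f => by
    apply mul_left_cancel₀ aux_X2_ne
    have h1 := hT (Xm 1 * f)
    have h2 := hT f
    rw [hSX] at h1
    rw [LaurentPolynomial.smul_eq_C_mul, LaurentPolynomial.smul_eq_C_mul] at h1 h2
    rw [LaurentPolynomial.smul_eq_C_mul]
    rw [hX2] at *
    linear_combination (Xm 1) * h1 - h2 + (LaurentPolynomial.C t2 * (Xm 1 * Xm 1 - 1) * S f
      + LaurentPolynomial.C c * S f) * hXm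
  have hTT : ∀ f, Top (Top f) = c • Top f + f := fun f => by
    apply mul_left_cancel₀ aux_X2_ne
    apply mul_left_cancel₀ aux_X2_ne
    have h1 := hT (Top f)
    have h2 := hT f
    have h3 := congrArg S h2
    have hS2 : ∀ g, S ((Xm 2 - 1) * g) = Xm (-1) * (Xm (-1) * S g) - S g := fun g => by
      rw [sub_mul, one_mul, map_sub, hX2, mul_assoc, hSX, hSX]
    rw [map_add, map_smul, map_smul, map_sub, hS2, hS2, hSS] at h3
    rw [LaurentPolynomial.smul_eq_C_mul, LaurentPolynomial.smul_eq_C_mul] at h1 h2 h3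
    rw [LaurentPolynomial.smul_eq_C_mul]
    have hCc : LaurentPolynomial.C c = LaurentPolynomial.C t2 - LaurentPolynomial.C t2⁻¹ := by
      rw [hc, map_sub]
    have hCt : (LaurentPolynomial.C t2 : V) * LaurentPolynomial.C t2⁻¹ = 1 := by
      rw [← map_mul, mul_inv_cancel₀ ht2, map_one]
    have hXX : Xm 2 * (Xm (-1) * Xm (-1)) = 1 := by
      rw [← aux_Xadd, ← aux_Xadd, ← aux_X0]; norm_num
    rw [hCc] at h1 h2 h3 ⊢
    generalize (LaurentPolynomial.C t2 : V) = t at *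
    generalize (LaurentPolynomial.C t2⁻¹ : V) = u at *
    generalize Xm 2 = x at *
    generalize Xm (-1) = y at *
    have h4 : (x - 1) * S (Top f) = (u * x - t) * f + (t - u) * x * S f := by
      linear_combination (-x) * h3 + (S (Top f) - t * f) * hXX
    linear_combination (x - 1) * h1 + (t * x - u) * h4 - (t - u) * x * h2 +
      (x - 1) ^ 2 * f * hCt
  have hT1 : Top 1 = t2 • (1 : V) := by
    apply mul_left_cancel₀ aux_X2_ne
    have h1 := hT 1
    have : S 1 = 1 := by rw [← aux_X0, hS, neg_zero]
    rw [h1, this, sub_self, smul_zero, add_zero, mul_smul_comm]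
  have hP1 : Pi 1 = 1 := by rw [← aux_X0, hPi, neg_zero, zpow_zero, one_smul]
  have hY1 : Y 1 = t2 • (1 : V) := by rw [hY, LinearMap.comp_apply, hT1, map_smul, hP1]
  set Ti : V →ₗ[ℂ] V := Top - c • LinearMap.id with hTi
  have hTi' : ∀ f, Ti f = Top f - c • f := fun f => rfl
  have hTTi : ∀ f, Top (Ti f) = f := fun f => by
    rw [hTi', map_sub, map_smul, hTT, add_sub_cancel_left]
  have hTiT : ∀ f, Ti (Top f) = f := fun f => by
    rw [hTi', hTT, add_sub_cancel_left]
  have hYe : ∀ f, Y f = Pi (Top f) := fun f => by rw [hY]; rfl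
  have hYie : ∀ f, Yz (-1) f = Ti (Pi f) := fun f => by
    rw [← hiY (Ti (Pi f)), hYe, hTTi, hPP]
  have hTX : ∀ f, Top (Xm 1 * f) = Xm (-1) * Ti f := fun f => by
    rw [hTi', ← hXTX, aux_XiX]
  have hevT : ∀ f, ev (Top f) = t2 * ev f := by
    refine aux_ind (ev ∘ₗ Top) (t2 • ev) ?_ ?_
    · simp only [LinearMap.comp_apply, LinearMap.smul_apply]
      rw [hT1, map_smul]
    · intro f
      simp only [LinearMap.comp_apply, LinearMap.smul_apply, smul_eq_mul]
      rw [hTX, hevXi, hevX, hTi', map_sub, map_smul, smul_eq_mul, mul_right_inj' ht2, hc]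
      constructor <;> intro h <;> linear_combination h
  have hevTi : ∀ f, ev (Ti f) = t2⁻¹ * ev f := fun f => by
    have := hevT (Ti f)
    rw [hTTi] at this
    rw [this, inv_mul_cancel_left₀ ht2]
  -- T is self adjoint
  have hpT : ∀ f g, pair (Top f) g = pair f (Top g) := by
    have key := aux_ind (pair ∘ₗ Top) (pair.compl₂ Top) ?_ ?_
    · intro f g
      exact LinearMap.congr_fun (key f) g
    · refine LinearMap.ext fun g => ?_
      simp only [LinearMap.comp_apply, LinearMap.compl₂_apply]
      rw [hT1, map_smul, LinearMap.smul_apply, hp1, hp1, hevT, smul_eq_mul]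
    · intro f
      have e1 : ∀ g, pair (Top (Xm 1 * f)) g = pair (Top f) (Y g) - c * pair f (Y g) := by
        intro g
        rw [hTX, hpXi, hTi', map_sub, map_smul]; rfl
      have e2 : ∀ g, pair (Xm 1 * f) (Top g) = pair f (Top (Y g)) - c * pair f (Y g) := by
        intro g
        rw [hpX, hYie, ← hYe, hTi', map_sub, map_smul]; rfl
      constructor
      · intro h
        refine LinearMap.ext fun g => ?_
        have := LinearMap.congr_fun h (Y g)
        simp only [LinearMap.comp_apply, LinearMap.compl₂_apply] at this ⊢
        rw [e1, e2, this]
      · intro h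
        refine LinearMap.ext fun g => ?_
        have := LinearMap.congr_fun h (Yz (-1) g)
        simp only [LinearMap.comp_apply, LinearMap.compl₂_apply] at this ⊢
        rw [e1, e2, hYi] at this
        linear_combination this
  -- adjoint of Pi
  have hpP : ∀ f g, pair (Pi f) g = pair f (Ti (Xm (-1) * g)) := by
    have key := aux_ind (pair ∘ₗ Pi)
      (pair.compl₂ (Ti ∘ₗ LinearMap.mulLeft ℂ (Xm (-1)))) ?_ ?_
    · intro f g
      exact LinearMap.congr_fun (key f) g
    · refine LinearMap.ext fun g => ?_
      simp only [LinearMap.comp_apply, LinearMap.compl₂_apply, LinearMap.mulLeft_apply]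
      rw [hP1, hp1, hp1, hevTi, hevXi, inv_mul_cancel_left₀ ht2]
    · intro f
      have e1 : ∀ g, pair (Pi (Xm 1 * f)) g = q2 * pair (Pi f) (Y g) := by
        intro g
        rw [hPX, map_smul, LinearMap.smul_apply, hpXi, smul_eq_mul]
      have e2 : ∀ g, pair (Xm 1 * f) (Ti (Xm (-1) * g)) =
          q2 * pair f (Ti (Xm (-1) * Y g)) := by
        intro g
        have : Ti (Xm (-1) * g) = Xm 1 * Top g := by
          have h := hXTX (Xm (-1) * g)
          rw [aux_XXi] at h
          rw [hTi', h]
        rw [hpX, hYie, this, hPX, ← hYe, map_smul, map_smul, smul_eq_mul]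
      constructor
      · intro h
        refine LinearMap.ext fun g => ?_
        have := LinearMap.congr_fun h (Y g)
        simp only [LinearMap.comp_apply, LinearMap.compl₂_apply, LinearMap.mulLeft_apply] at this ⊢
        rw [e1, e2, this]
      · intro h
        refine LinearMap.ext fun g => ?_
        have := LinearMap.congr_fun h (Yz (-1) g)
        simp only [LinearMap.comp_apply, LinearMap.compl₂_apply, LinearMap.mulLeft_apply] at this ⊢
        rw [e1, e2, hYi] at this
        exact mul_left_cancel₀ hq2 this
  have hpY : ∀ f g, pair (Y f) g = pair f (Xm (-1) * g) := fun f g => by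
    rw [hYe, hpP, hpT, hTTi]
  have hpYi : ∀ f g, pair (Yz (-1) f) g = pair f (Xm 1 * g) := fun f g => by
    have := hpY (Yz (-1) f) (Xm 1 * g)
    rw [hYi, aux_XiX] at this
    exact this.symm
  have hpev : ∀ f, pair f 1 = ev f := by
    refine aux_ind (pair.flip 1) ev (hp1 1) ?_
    intro f
    have hYi1 : Yz (-1) 1 = t2⁻¹ • (1 : V) := by
      have := hiY 1
      rw [hY1, map_smul] at this
      rw [← this, smul_smul, inv_mul_cancel₀ ht2, one_smul, this]
    simp only [LinearMap.flip_apply]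
    rw [hpX, hYi1, map_smul, hevX, smul_eq_mul, mul_right_inj' (inv_ne_zero ht2)]
  refine ⟨fun f hf => ?_, fun U hU hUev => ?_⟩
  · rw [← hpev, show pair f = 0 from hf]; rfl
  · have hUY : ∀ f ∈ U, Y f ∈ U := fun f hf => by
      rw [hYe]; exact (hU _ (hU f hf).1).2.1
    have hUYi : ∀ f ∈ U, Yz (-1) f ∈ U := fun f hf => by
      rw [hYie, hTi']
      have := (hU f hf).2.1
      exact U.sub_mem (hU _ this).1 (U.smul_mem c this)
    have main : ∀ m : ℤ, ∀ f ∈ U, pair f (Xm m) = 0 := by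
      intro m
      induction m using Int.induction_on with
      | zero => intro f hf; rw [aux_X0, hpev]; exact hUev f hf
      | succ n ih =>
        intro f hf
        rw [add_comm, aux_Xadd, ← hpYi]
        exact ih _ (hUYi f hf)
      | pred n ih =>
        intro f hf
        rw [sub_eq_add_neg, add_comm, aux_Xadd, ← hpY]
        exact ih _ (hUY f hf)
    intro f hf
    change pair f = 0
    refine LinearMap.ext fun g => ?_
    exact aux_ext (pair f) 0 (fun m => main m f hf) g
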